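/- arXiv:math/0403278 — 2 statements merged into one kernel-verified Lean document; each statement's English description precedes it below -/
import Mathlib

section
/- Let K be a convex body in ℝ^n. Then there exists a nonempty subset I ⊆ {1,...,n} such that the orthogonal projection P_I K of K onto ℝ^I contains at least vol(K)/4^n − 2^{-n} integer cells of the lattice P_I ℤ^n. In particular, if vol(K/6) ≥ 1 then P_I K contains at least vol(K)/6^n integer cells. -/
open MeasureTheory

/-- The coordinate projection of `K ⊆ ℝ^n` onto the coordinates in `I`. -/
def projSet {n : ℕ} (K : Set (Fin n → ℝ)) (I : Finset (Fin n)) :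
    Set ({i // i ∈ I} → ℝ) :=
  {z | ∃ x ∈ K, ∀ i : {i // i ∈ I}, x i.1 = z i}

/-- The number of integer cells `a + [0,1]^I` of the lattice `ℤ^I` contained
in a set `S ⊆ ℝ^I`. -/
noncomputable def cellCount {n : ℕ} (I : Finset (Fin n))
    (S : Set ({i // i ∈ I} → ℝ)) : ℕ :=
  Set.ncard {a : {i // i ∈ I} → ℤ |
    {y : {i // i ∈ I} → ℝ | ∀ i, (a i : ℝ) ≤ y i ∧ y i ≤ a i + 1} ⊆ S}


/-- A partial cell `c` is shattered by `K`: the cell lies in the projection of `K`. -/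
def Shat {n : ℕ} (K : Set (Fin n → ℝ)) (c : Fin n → Option ℤ) : Prop :=
  ∀ y : Fin n → ℝ, (∀ i a, c i = some a → (a : ℝ) ≤ y i ∧ y i ≤ a + 1) →
    ∃ x ∈ K, ∀ i a, c i = some a → x i = y i

theorem convex_tail {n : ℕ} {K : Set (Fin (n+1) → ℝ)} (hK : Convex ℝ K) :
    Convex ℝ (Fin.tail '' K : Set (Fin n → ℝ)) := by
  rintro _ ⟨x, hx, rfl⟩ _ ⟨y, hy, rfl⟩ a b ha hb hab
  exact ⟨a • x + b • y, hK hx hy ha hb hab, rfl⟩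

theorem convex_slice {n : ℕ} {K : Set (Fin (n+1) → ℝ)} (hK : Convex ℝ K) (k : ℝ) :
    Convex ℝ {z : Fin n → ℝ | (Fin.cons k z : Fin (n+1) → ℝ) ∈ K} := by
  intro x hx y hy a b ha hb hab
  have := hK hx hy ha hb hab
  simp only [Set.mem_ofPred_eq]
  convert this using 1
  funext i
  refine Fin.cases ?_ (fun j => ?_) i
  · simp [← add_mul, hab]
  · simp

theorem line_mem {n : ℕ} {K : Set (Fin (n+1) → ℝ)} (hK : Convex ℝ K) {k l t : ℝ} {z : Fin n → ℝ}
    (hk : (Fin.cons k z : Fin (n+1) → ℝ) ∈ K) (hl : (Fin.cons l z : Fin (n+1) → ℝ) ∈ K)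
    (h1 : k ≤ t) (h2 : t ≤ l) : (Fin.cons t z : Fin (n+1) → ℝ) ∈ K := by
  rcases eq_or_lt_of_le (h1.trans h2) with h | h
  · have : t = k := by linarith
    rwa [this]
  have hd : 0 < l - k := by linarith
  have := hK hk hl (a := (l - t) / (l - k)) (b := (t - k) / (l - k))
    (div_nonneg (by linarith) hd.le) (div_nonneg (by linarith) hd.le) (by field_simp; ring)
  convert this using 1
  funext i
  refine Fin.cases ?_ (fun j => ?_) i
  · simp; field_simp; ring
  · simp; field_simp; ring

theorem shat_main : ∀ (n : ℕ) (K : Set (Fin n → ℝ)), Convex ℝ K → ∀ A : Finset (Fin n → ℤ),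
    (∀ a ∈ A, (fun i => (a i : ℝ)) ∈ K) →
    ∃ C : Finset (Fin n → Option ℤ), A.card ≤ C.card ∧ ∀ c ∈ C, Shat K c := by
  classical
  intro n
  induction n with
  | zero =>
    intro K _ A hA
    rcases A.eq_empty_or_nonempty with rfl | ⟨a, ha⟩
    · exact ⟨∅, by simp, by simp⟩
    · refine ⟨{fun i => i.elim0}, ?_, ?_⟩
      · rw [Finset.card_singleton]; exact Finset.card_le_one.2 fun _ _ _ _ => Subsingleton.elim _ _
      · intro c _ y _
        exact ⟨_, hA a ha, fun i => i.elim0⟩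
  | succ n ih =>
    intro K hK A hA
    have cast_cons : ∀ (k : ℤ) (b : Fin n → ℤ),
        (fun i => (((Fin.cons k b : Fin (n+1) → ℤ) i : ℤ) : ℝ)) =
          (Fin.cons (k:ℝ) (fun i => (b i : ℝ)) : Fin (n+1) → ℝ) := by
      intro k b; funext i; refine Fin.cases ?_ (fun j => ?_) i <;> simp
    obtain ⟨C0, hC0, hS0⟩ := ih _ (convex_tail hK) (A.image Fin.tail) (by
      intro a ha
      obtain ⟨a', ha', rfl⟩ := Finset.mem_image.1 ha
      exact ⟨_, hA a' ha', rfl⟩)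
    let N := A.filter (fun a => ∃ a' ∈ A, Fin.tail a' = Fin.tail a ∧ a 0 < a' 0)
    have hN : A.card ≤ (A.image Fin.tail).card + N.card := by
      have h1 : (A.filter (fun a => ¬ ∃ a' ∈ A, Fin.tail a' = Fin.tail a ∧ a 0 < a' 0)).card
          ≤ (A.image Fin.tail).card := by
        apply Finset.card_le_card_of_injOn Fin.tail
        · intro a ha
          have := (Finset.mem_filter.1 (Finset.mem_coe.1 ha)).1
          exact Finset.mem_coe.2 (Finset.mem_image_of_mem _ this)
        · intro a ha b hb hab
          obtain ⟨ha1, ha2⟩ := Finset.mem_filter.1 (Finset.mem_coe.1 ha)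
          obtain ⟨hb1, hb2⟩ := Finset.mem_filter.1 (Finset.mem_coe.1 hb)
          push Not at ha2 hb2
          have e : a 0 = b 0 := le_antisymm (hb2 a ha1 hab) (ha2 b hb1 hab.symm)
          rw [← Fin.cons_self_tail a, ← Fin.cons_self_tail b, hab, e]
      have := Finset.card_filter_add_card_filter_not (s := A)
        (fun a => ∃ a' ∈ A, Fin.tail a' = Fin.tail a ∧ a 0 < a' 0)
      simp only [N]
      omega
    have key : ∀ k : ℤ, ∃ C : Finset (Fin n → Option ℤ),
        (N.filter (fun a => a 0 = k)).card ≤ C.card ∧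
        ∀ c ∈ C, Shat ({z | (Fin.cons (k:ℝ) z : Fin (n+1) → ℝ) ∈ K} ∩
          {z | (Fin.cons ((k:ℝ)+1) z : Fin (n+1) → ℝ) ∈ K}) c := by
      intro k
      obtain ⟨C, hC, hS⟩ := ih _ ((convex_slice hK (k:ℝ)).inter (convex_slice hK ((k:ℝ)+1)))
        ((N.filter (fun a => a 0 = k)).image Fin.tail) (by
          intro b hb
          obtain ⟨a, ha, rfl⟩ := Finset.mem_image.1 hb
          obtain ⟨haN, hak⟩ := Finset.mem_filter.1 ha
          obtain ⟨haA, a', haA', ht, hlt⟩ := Finset.mem_filter.1 haN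
          have m1 := hA a haA
          have m2 := hA a' haA'
          rw [← Fin.cons_self_tail a, cast_cons] at m1
          rw [← Fin.cons_self_tail a', cast_cons, ht] at m2
          rw [hak] at m1 hlt
          refine ⟨m1, line_mem hK m1 m2 (by linarith) ?_⟩
          exact_mod_cast hlt)
      refine ⟨C, ?_, hS⟩
      rwa [Finset.card_image_of_injOn] at hC
      intro a ha b hb hab
      have ha1 := (Finset.mem_filter.1 (Finset.mem_coe.1 ha)).2
      have hb1 := (Finset.mem_filter.1 (Finset.mem_coe.1 hb)).2
      rw [← Fin.cons_self_tail a, ← Fin.cons_self_tail b, hab, ha1, hb1]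
    choose D hD hSD using key
    let f : Option ℤ → (Fin n → Option ℤ) → (Fin (n+1) → Option ℤ) := fun o c => Fin.cons o c
    have finj : ∀ o, Function.Injective (f o) := by
      intro o a b h
      have := congrArg Fin.tail h
      simpa [f] using this
    let T := N.image (fun a => a 0)
    let C1 := T.biUnion (fun k => (D k).image (f (some k)))
    have hC1 : N.card ≤ C1.card := by
      rw [Finset.card_biUnion]
      · rw [Finset.card_eq_sum_card_image (fun a => a 0) N]
        apply Finset.sum_le_sum
        intro k _
        rw [Finset.card_image_of_injective _ (finj _)]
        exact hD k
      · intro k _ l _ hkl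
        refine Finset.disjoint_left.2 ?_
        intro c hc hc'
        obtain ⟨u, _, rfl⟩ := Finset.mem_image.1 hc
        obtain ⟨v, _, hv⟩ := Finset.mem_image.1 hc'
        have := congrFun hv 0
        simp [f] at this
        exact hkl this.symm
    refine ⟨C0.image (f none) ∪ C1, ?_, ?_⟩
    · rw [Finset.card_union_of_disjoint, Finset.card_image_of_injective _ (finj _)]
      · omega
      · rw [Finset.disjoint_left]
        intro c hc hc'
        obtain ⟨u, _, rfl⟩ := Finset.mem_image.1 hc
        obtain ⟨k, _, hk⟩ := Finset.mem_biUnion.1 hc'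
        obtain ⟨v, _, hv⟩ := Finset.mem_image.1 hk
        have := congrFun hv 0
        simp [f] at this
    · intro c hc
      rcases Finset.mem_union.1 hc with hc | hc
      · obtain ⟨u, hu, rfl⟩ := Finset.mem_image.1 hc
        intro y hy
        obtain ⟨_, ⟨x, hx, rfl⟩, hxy⟩ := hS0 u hu (Fin.tail y) (fun i a h => hy i.succ a (by simpa [f] using h))
        refine ⟨x, hx, fun i => ?_⟩
        refine Fin.cases ?_ (fun j => ?_) i
        · intro a h; simp [f] at h
        · intro a h; exact hxy j a (by simpa [f] using h)
      · obtain ⟨k, _, hk⟩ := Finset.mem_biUnion.1 hc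
        obtain ⟨u, hu, rfl⟩ := Finset.mem_image.1 hk
        intro y hy
        obtain ⟨z, ⟨hz1, hz2⟩, hzy⟩ := hSD k u hu (Fin.tail y) (fun i a h => hy i.succ a (by simpa [f] using h))
        have h0 := hy 0 k (by simp [f])
        refine ⟨Fin.cons (y 0) z, line_mem hK hz1 hz2 h0.1 h0.2, fun i => ?_⟩
        refine Fin.cases ?_ (fun j => ?_) i
        · intro a h; simp
        · intro a h
          rw [Fin.cons_succ]
          exact hzy j a (by simpa [f] using h)

theorem finite_lattice {ι : Type*} [Fintype ι] {S : Set (ι → ℝ)} (hS : Bornology.IsBounded S) (x : ι → ℝ) :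
    {a : ι → ℤ | x + (fun i => (a i : ℝ)) ∈ S}.Finite := by
  obtain ⟨R, hR⟩ := hS.exists_norm_le
  classical
  apply (Set.finite_Icc (fun i => ⌊-R - x i⌋) (fun i => ⌈R - x i⌉)).subset
  intro a ha
  have h := hR _ ha
  have h' : ∀ i, |x i + a i| ≤ R := fun i => by
    have := norm_le_pi_norm (x + (fun i => (a i : ℝ))) i
    simp only [Pi.add_apply, Real.norm_eq_abs] at this
    exact this.trans h
  refine ⟨fun i => ?_, fun i => ?_⟩
  · have := (abs_le.1 (h' i)).1
    have h2 := Int.floor_le (-R - x i)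
    have : (⌊-R - x i⌋ : ℝ) ≤ a i := by linarith
    exact_mod_cast this
  · have := (abs_le.1 (h' i)).2
    have h2 := Int.le_ceil (R - x i)
    have : (a i : ℝ) ≤ ⌈R - x i⌉ := by linarith
    exact_mod_cast this

theorem exists_shift {n : ℕ} {S : Set (Fin n → ℝ)} (hS : IsCompact S) :
    ∃ x : Fin n → ℝ, ∃ A : Finset (Fin n → ℤ),
      (∀ a ∈ A, x + (fun i => (a i : ℝ)) ∈ S) ∧ volume S ≤ (A.card : ENNReal) := by
  classical
  let Q : Set (Fin n → ℝ) := Set.univ.pi (fun _ => Set.Ico 0 1)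
  have hQ : volume Q = 1 := by simp [Q, volume_pi_pi]
  have hQm : MeasurableSet Q := MeasurableSet.univ_pi fun _ => measurableSet_Ico
  let v : (Fin n → ℤ) → (Fin n → ℝ) := fun a i => (a i : ℝ)
  let fl : (Fin n → ℝ) → (Fin n → ℤ) := fun x i => ⌊x i⌋
  have hfl : Measurable fl := measurable_pi_lambda _ fun i =>
    Int.measurable_floor.comp (measurable_pi_apply i)
  have hSm := hS.measurableSet
  let f : (Fin n → ℤ) → (Fin n → ℝ) → ENNReal :=
    fun a => ((fun x => x + v a) ⁻¹' S).indicator 1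
  have hpm : ∀ a, MeasurableSet ((fun x => x + v a) ⁻¹' S) := fun a =>
    (measurable_id.add_const (v a)) hSm
  have hint : ∫⁻ x in Q, ∑' a, f a x = volume S := by
    rw [lintegral_tsum (fun a => ((measurable_one.indicator (hpm a))).aemeasurable)]
    have h1 : ∀ a, ∫⁻ x in Q, f a x = (volume.restrict S) (fl ⁻¹' {a}) := by
      intro a
      rw [lintegral_indicator_one (hpm a), Measure.restrict_apply (hpm a),
        Measure.restrict_apply (hfl (measurableSet_singleton a)),
        ← measure_preimage_add_right volume (v a) (fl ⁻¹' {a} ∩ S)]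
      congr 1
      ext x
      simp only [Set.mem_inter_iff, Set.mem_preimage, Set.mem_singleton_iff, Q, Set.mem_pi, Set.mem_univ,
        true_imp_iff, Set.mem_Ico, fl, funext_iff, v, Pi.add_apply, Int.floor_add_intCast,
        add_eq_right, Int.floor_eq_zero_iff]
      tauto
    rw [tsum_congr h1]
    have := tsum_measure_preimage_singleton (μ := volume.restrict S) (f := fl)
      (Set.countable_univ (α := Fin n → ℤ)) (fun y _ => hfl (measurableSet_singleton y))
    rw [tsum_univ (f := fun b => (volume.restrict S) (fl ⁻¹' {b}))] at this
    rw [this]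
    simp
  obtain ⟨x, _, hx⟩ := exists_setLAverage_le (μ := volume) (s := Q) (f := fun x => ∑' a, f a x)
    (by simp [hQ]) hQm.nullMeasurableSet (by rw [hint]; exact hS.measure_lt_top.ne)
  rw [setLAverage_eq, hint, hQ, div_one] at hx
  have hfin := finite_lattice hS.isBounded x
  refine ⟨x, hfin.toFinset, ?_, ?_⟩
  · intro a ha
    exact hfin.mem_toFinset.1 ha
  · refine hx.trans (le_of_eq ?_)
    rw [tsum_eq_sum (s := hfin.toFinset)]
    · rw [Finset.sum_congr rfl (g := fun _ => 1)]
      · simp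
      · intro a ha
        have : x ∈ (fun x => x + v a) ⁻¹' S := hfin.mem_toFinset.1 ha
        simp [f, Set.indicator_of_mem this]
    · intro a ha
      have : x ∉ (fun x => x + v a) ⁻¹' S := fun h => ha (hfin.mem_toFinset.2 h)
      simp [f, Set.indicator_of_notMem this]

theorem shat_scale {n : ℕ} {K : Set (Fin n → ℝ)} {x : Fin n → ℝ} {c : Fin n → Option ℤ}
    (h : Shat {z | (2:ℝ) • (x + z) ∈ K} c) :
    Shat K (fun i => (c i).map (fun k => ⌈2 * x i⌉ + 2 * k)) := by
  intro y hy
  obtain ⟨z, hz, hzy⟩ := h (fun i => y i / 2 - x i) (by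
    intro i k hk
    have := hy i (⌈2 * x i⌉ + 2 * k) (by simp only [hk, Option.map_some])
    push_cast at this
    have h1 := Int.le_ceil (2 * x i)
    have h2 := Int.ceil_lt_add_one (2 * x i)
    constructor <;> linarith)
  refine ⟨_, hz, fun i a ha => ?_⟩
  obtain ⟨k, hk, _⟩ := Option.map_eq_some_iff.1 ha
  have := hzy i k hk
  simp [this]
  ring

theorem fiber_le {n : ℕ} {K : Set (Fin n → ℝ)} (hK : IsCompact K) (I : Finset (Fin n))
    (x : Fin n → ℝ) (C : Finset (Fin n → Option ℤ))
    (hC : ∀ c ∈ C, Shat {z | (2:ℝ) • (x + z) ∈ K} c)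
    (hI : ∀ c ∈ C, ∀ i, i ∈ I ↔ (c i).isSome) : C.card ≤ cellCount I (projSet K I) := by
  classical
  rw [cellCount, ← Set.ncard_coe_finset]
  refine Set.ncard_le_ncard_of_injOn
    (fun (c : Fin n → Option ℤ) (i : {i // i ∈ I}) => ⌈2 * x i.1⌉ + 2 * (c i.1).getD 0)
    ?_ ?_ ?_
  · intro c hc y hy
    have hc := Finset.mem_coe.1 hc
    have hs := shat_scale (hC c hc)
    obtain ⟨w, hw, hwy⟩ := hs (fun i => if h : i ∈ I then y ⟨i, h⟩ else 0) (by
      intro i a ha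
      obtain ⟨k, hk, rfl⟩ := Option.map_eq_some_iff.1 ha
      have hi : i ∈ I := (hI c hc i).2 (by simp [hk])
      have := hy ⟨i, hi⟩
      simpa [hi, hk] using this)
    refine ⟨w, hw, fun i => ?_⟩
    obtain ⟨k, hk⟩ := Option.isSome_iff_exists.1 ((hI c hc i.1).1 i.2)
    have := hwy i.1 (⌈2 * x i.1⌉ + 2 * k) (by simp only [hk, Option.map_some])
    simpa using this
  · intro c hc d hd hcd
    have hc := Finset.mem_coe.1 hc
    have hd := Finset.mem_coe.1 hd
    funext i
    by_cases hi : i ∈ I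
    · obtain ⟨k, hk⟩ := Option.isSome_iff_exists.1 ((hI c hc i).1 hi)
      obtain ⟨l, hl⟩ := Option.isSome_iff_exists.1 ((hI d hd i).1 hi)
      have := congrFun hcd ⟨i, hi⟩
      simp [hk, hl] at this
      rw [hk, hl, this]
    · have h1 := mt (hI c hc i).2 hi
      have h2 := mt (hI d hd i).2 hi
      simp only [Option.not_isSome_iff_eq_none] at h1 h2
      rw [h1, h2]
  · have hcomp : IsCompact ((fun (x : Fin n → ℝ) (i : {i // i ∈ I}) => x i.1) '' K) :=
      hK.image (by fun_prop)
    refine (finite_lattice hcomp.isBounded 0).subset ?_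
    intro a ha
    obtain ⟨w, hw, hwa⟩ := ha (show (fun i => (a i : ℝ)) ∈ _ from fun i => ⟨le_rfl, by simp⟩)
    refine ⟨w, hw, ?_⟩
    funext i
    simpa using hwa i

/-- **Theorem 2.10 / Theorem 1.1.** A convex body `K ⊆ ℝ^n` has a coordinate
projection containing at least `vol(K)/4^n − 2^{−n}` integer cells; in
particular at least `vol(K/6) = vol(K)/6^n` cells when this is at least `1`. -/
theorem exists_projection_with_many_cells (n : ℕ) (hn : 0 < n)
    (K : Set (Fin n → ℝ)) (hconv : Convex ℝ K) (hcomp : IsCompact K)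
    (hint : (interior K).Nonempty) :
    ∃ I : Finset (Fin n), I.Nonempty ∧
      (volume K).toReal / 4 ^ n - 2 ^ (-(n : ℤ)) ≤ (cellCount I (projSet K I) : ℝ) ∧
      (1 ≤ (volume K).toReal / 6 ^ n →
        (volume K).toReal / 6 ^ n ≤ (cellCount I (projSet K I) : ℝ)) := by
  classical
  let S : Set (Fin n → ℝ) := (fun z => (2:ℝ) • z) ⁻¹' K
  have hScomp : IsCompact S := by
    have : S = (fun z : Fin n → ℝ => (2:ℝ)⁻¹ • z) '' K := by
      ext z
      constructor
      · intro h
        exact ⟨_, h, by simp [smul_smul]⟩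
      · rintro ⟨w, hw, rfl⟩
        simpa [S, smul_smul] using hw
    rw [this]
    exact hcomp.image (by fun_prop)
  have hvol : (volume S).toReal = (volume K).toReal / 2 ^ n := by
    have := Measure.addHaar_preimage_smul (volume : Measure (Fin n → ℝ)) (r := 2) (by norm_num) K
    rw [show volume S = _ from this, ENNReal.toReal_mul, ENNReal.toReal_ofReal (abs_nonneg _)]
    simp
    ring
  obtain ⟨x, A, hA, hcard⟩ := exists_shift hScomp
  have hcard' : (volume K).toReal / 2 ^ n ≤ A.card := by
    rw [← hvol]
    have := ENNReal.toReal_mono (by simp) hcard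
    simpa using this
  have hconv' : Convex ℝ {z : Fin n → ℝ | (2:ℝ) • (x + z) ∈ K} := by
    intro u hu w hw a b ha hb hab
    have := hconv hu hw ha hb hab
    simp only [Set.mem_ofPred_eq]
    convert this using 1
    have : x = a • x + b • x := by rw [← add_smul, hab, one_smul]
    conv_lhs => rw [this]
    module
  obtain ⟨C, hAC, hC⟩ := shat_main n _ hconv' A hA
  let supp : (Fin n → Option ℤ) → Finset (Fin n) :=
    fun c => Finset.univ.filter (fun i => (c i).isSome)
  let P : Finset (Finset (Fin n)) := Finset.univ.erase ∅
  have hPne : P.Nonempty := ⟨{⟨0, hn⟩}, by simp [P]⟩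
  obtain ⟨I, hI, hmax⟩ := P.exists_max_image (fun I => cellCount I (projSet K I)) hPne
  have hfib : ∀ J, (C.filter (fun c => supp c = J)).card ≤ cellCount J (projSet K J) := by
    intro J
    apply fiber_le hcomp J x
    · intro c hc; exact hC c (Finset.mem_filter.1 hc).1
    · intro c hc i
      rw [← (Finset.mem_filter.1 hc).2]
      simp [supp]
  have hempty : (C.filter (fun c => supp c = ∅)).card ≤ 1 := by
    apply Finset.card_le_one.2
    have : ∀ c ∈ C.filter (fun c => supp c = ∅), c = fun _ => none := by
      intro c hc
      have := (Finset.mem_filter.1 hc).2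
      funext i
      simpa [supp] using Finset.filter_eq_empty_iff.1 this (Finset.mem_univ i)
    intro c hc d hd
    rw [this c hc, this d hd]
  have hsum : C.card ≤ 1 + 2 ^ n * cellCount I (projSet K I) := by
    rw [Finset.card_eq_sum_card_fiberwise (f := supp) (t := Finset.univ) (by simp),
      ← Finset.add_sum_erase _ _ (Finset.mem_univ ∅)]
    refine add_le_add hempty ?_
    refine (Finset.sum_le_card_nsmul _ _ (cellCount I (projSet K I))
      (fun J hJ => (hfib J).trans (hmax J hJ))).trans ?_
    rw [smul_eq_mul]
    refine Nat.mul_le_mul_right _ ?_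
    refine (Finset.card_le_univ _).trans ?_
    simp
  have hsumR : (A.card : ℝ) ≤ 1 + 2 ^ n * (cellCount I (projSet K I) : ℝ) := by
    exact_mod_cast hAC.trans hsum
  have main : (volume K).toReal / 4 ^ n - 2 ^ (-(n : ℤ)) ≤ (cellCount I (projSet K I) : ℝ) := by
    have h := hcard'.trans hsumR
    have h4 : (4:ℝ) ^ n = 2 ^ n * 2 ^ n := by rw [← mul_pow]; norm_num
    have hp : (0:ℝ) < 2 ^ n := by positivity
    rw [h4, zpow_neg, zpow_natCast, ← div_div, inv_eq_one_div, ← sub_div, div_le_iff₀ hp]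
    linarith
  refine ⟨I, Finset.nonempty_iff_ne_empty.2 (Finset.mem_erase.1 hI).1, main, fun h6 => ?_⟩
  refine le_trans ?_ main
  set V := (volume K).toReal
  have e : V / 4 ^ n = V / 6 ^ n * (3 / 2) ^ n := by
    rw [div_pow, div_mul_div_comm, show (6:ℝ) ^ n = 3 ^ n * 2 ^ n by rw [← mul_pow]; norm_num,
      show (4:ℝ) ^ n = 2 ^ n * 2 ^ n by rw [← mul_pow]; norm_num]
    field_simp
  have b1 : (3/2 : ℝ) ≤ (3/2) ^ n := by
    calc (3/2:ℝ) = (3/2)^1 := by norm_num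
      _ ≤ _ := pow_le_pow_right₀ (by norm_num) hn
  have b2 : (2:ℝ) ^ (-(n:ℤ)) ≤ 1/2 := by
    rw [zpow_neg, zpow_natCast, one_div]
    apply inv_anti₀ (by norm_num)
    calc (2:ℝ) = 2^1 := by norm_num
      _ ≤ _ := pow_le_pow_right₀ (by norm_num) hn
  rw [e]
  nlinarith
end

section
/- Let K ⊆ B_p^n be a measurable set, 1 ≤ p ≤ ∞, and 0 < k ≤ n an integer. Then the combinatorial dimension satisfies v(K, t) ≥ n − k for t = c(k/n)·(vol(K)/vol(B_p^n))^{1/k}, where c > 0 is an absolute constant. -/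
open MeasureTheory

/-- The normalized `L_p^n` ball `B_p^n = {x : ∑ |x i|^p ≤ n}` (finite `p`). -/
def lpBall (p : ℝ) (n : ℕ) : Set (Fin n → ℝ) :=
  {x | ∑ i, |x i| ^ p ≤ (n : ℝ)}

/-- The `L_∞^n` ball `B_∞^n = [-1,1]^n`. -/
def cubeBall (n : ℕ) : Set (Fin n → ℝ) := {x | ∀ i, |x i| ≤ 1}

/-- `I` is `t`-shattered by `K ⊆ ℝ^n`. -/
def TShattered {n : ℕ} (K : Set (Fin n → ℝ)) (I : Finset (Fin n)) (t : ℝ) : Prop :=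
  ∃ h : Fin n → ℝ, ∀ S ⊆ I, ∃ x ∈ K,
    (∀ i ∈ S, h i + t ≤ x i) ∧ (∀ i ∈ I \ S, x i ≤ h i)

open Pointwise

/-- Thickened set of shattering centres: on coordinates with `σ i = true`, `h` is a centre of
`t`-shattering by `K`; on the other coordinates `h i ∈ [0,t]`. -/
def centres {n : ℕ} (t : ℝ) (K : Set (Fin n → ℝ)) (σ : Fin n → Bool) : Set (Fin n → ℝ) :=
  {h | (∀ i, σ i = false → 0 ≤ h i ∧ h i ≤ t) ∧ ∀ s : Fin n → Bool, ∃ x ∈ K, ∀ i, σ i = true →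
    (s i = true → h i + t ≤ x i) ∧ (s i = false → x i ≤ h i)}

lemma volume_cons_preimage {n : ℕ} (s : Set (Fin (n + 1) → ℝ)) :
    volume s = volume {q : ℝ × (Fin n → ℝ) | (Fin.cons q.1 q.2 : Fin (n + 1) → ℝ) ∈ s} := by
  have h := (volume_preserving_piFinSuccAbove (fun _ : Fin (n + 1) => ℝ) 0).symm
  have h2 := h.measure_preimage_equiv s
  rw [← h2]
  congr 1
  ext q
  simp [MeasurableEquiv.piFinSuccAbove, Fin.insertNthEquiv]

lemma one_dim {t : ℝ} {L : Set ℝ} (hL : IsCompact L) (hne : L.Nonempty) :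
    volume L ≤ ENNReal.ofReal t + volume {h : ℝ | (∃ a ∈ L, a ≤ h) ∧ ∃ b ∈ L, h + t ≤ b} := by
  obtain ⟨a, ha, hamin⟩ := hL.exists_isLeast hne
  obtain ⟨b, hb, hbmax⟩ := hL.exists_isGreatest hne
  calc volume L ≤ volume (Set.Icc a b) := measure_mono fun x hx => ⟨hamin hx, hbmax hx⟩
    _ = ENNReal.ofReal (b - a) := Real.volume_Icc
    _ = ENNReal.ofReal (t + (b - t - a)) := by congr 1; ring
    _ ≤ ENNReal.ofReal t + ENNReal.ofReal (b - t - a) := ENNReal.ofReal_add_le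
    _ = ENNReal.ofReal t + volume (Set.Icc a (b - t)) := by rw [Real.volume_Icc]
    _ ≤ _ := by
      gcongr
      intro x hx
      exact ⟨⟨a, ha, hx.1⟩, b, hb, by linarith [hx.2]⟩

/-- The lower integral of slice measures is at most the product (outer) measure. -/
lemma lintegral_slice_le {α β : Type*} [MeasurableSpace α] [MeasurableSpace β]
    (μ : Measure α) (ν : Measure β) [SFinite μ] [SFinite ν] {ι : Type*} (F : Finset ι)
    (s : ι → Set (α × β)) (f : α → ENNReal) (hf : ∀ a, f a ≤ ∑ i ∈ F, ν (Prod.mk a ⁻¹' s i)) :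
    ∫⁻ a, f a ∂μ ≤ ∑ i ∈ F, μ.prod ν (s i) := by
  calc ∫⁻ a, f a ∂μ ≤ ∫⁻ a, ∑ i ∈ F, ν (Prod.mk a ⁻¹' toMeasurable (μ.prod ν) (s i)) ∂μ := by
        apply lintegral_mono
        intro a
        refine (hf a).trans (Finset.sum_le_sum fun i _ => measure_mono ?_)
        exact Set.preimage_mono (subset_toMeasurable _ _)
    _ = ∑ i ∈ F, ∫⁻ a, ν (Prod.mk a ⁻¹' toMeasurable (μ.prod ν) (s i)) ∂μ :=
        lintegral_finsetSum _ fun i _ =>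
          measurable_measure_prodMk_left (measurableSet_toMeasurable _ _)
    _ = ∑ i ∈ F, μ.prod ν (s i) := by
        refine Finset.sum_congr rfl fun i _ => ?_
        rw [← Measure.prod_apply (measurableSet_toMeasurable _ _), measure_toMeasurable]

lemma volume_le_sum_centres {t : ℝ} (ht : 0 ≤ t) : ∀ {n : ℕ} (K : Set (Fin n → ℝ)),
    IsCompact K → volume K ≤ ∑ σ : Fin n → Bool, volume (centres t K σ) := by
  intro n
  induction n with
  | zero =>
    intro K _
    refine le_trans (measure_mono ?_) (Finset.single_le_sum (f := fun σ => volume (centres t K σ))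
      (fun _ _ => zero_le) (Finset.mem_univ (fun _ => true)))
    intro x hx
    exact ⟨fun i => i.elim0, fun s => ⟨x, hx, fun i => i.elim0⟩⟩
  | succ n ih =>
    intro K hK
    -- the set in product coordinates
    set Q : Set (ℝ × (Fin n → ℝ)) := {q | (Fin.cons q.1 q.2 : Fin (n + 1) → ℝ) ∈ K} with hQ
    have hQc : IsCompact Q := by
      have : Q = (fun x : Fin (n + 1) → ℝ => (x 0, fun i : Fin n => x i.succ)) '' K := by
        ext ⟨a, y⟩
        constructor
        · intro h
          exact ⟨_, h, by simp⟩
        · rintro ⟨x, hx, hxe⟩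
          obtain ⟨rfl, rfl⟩ := Prod.mk.inj hxe
          change (Fin.cons (x 0) (Fin.tail x) : Fin (n + 1) → ℝ) ∈ K
          rwa [Fin.cons_self_tail]
      rw [this]
      exact hK.image (by fun_prop)
    set P : Set (Fin n → ℝ) := Prod.snd '' Q with hP
    have hPc : IsCompact P := hQc.image continuous_snd
    set E : Set (ℝ × (Fin n → ℝ)) :=
      {q | (∃ a, (a, q.2) ∈ Q ∧ a ≤ q.1) ∧ ∃ b, (b, q.2) ∈ Q ∧ q.1 + t ≤ b} with hE
    have hEc : IsClosed E := by
      have h1 : IsClosed ((Set.Ici (0 : ℝ) ×ˢ {(0 : Fin n → ℝ)}) + Q) :=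
        (isClosed_Ici.prod isClosed_singleton).add_right_of_isCompact hQc
      have h2 : IsClosed ((Set.Iic (-t) ×ˢ {(0 : Fin n → ℝ)}) + Q) :=
        (isClosed_Iic.prod isClosed_singleton).add_right_of_isCompact hQc
      have : E = ((Set.Ici (0 : ℝ) ×ˢ {(0 : Fin n → ℝ)}) + Q) ∩
          ((Set.Iic (-t) ×ˢ {(0 : Fin n → ℝ)}) + Q) := by
        ext ⟨h, y⟩
        constructor
        · rintro ⟨⟨a, ha, hah⟩, b, hb, hbh⟩
          refine ⟨Set.mem_add.2 ⟨(h - a, 0), ⟨?_, rfl⟩, (a, y), ha, ?_⟩,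
            Set.mem_add.2 ⟨(h - b, 0), ⟨?_, rfl⟩, (b, y), hb, ?_⟩⟩
          · simpa using hah
          · simp
          · simp only [Set.mem_Iic]; simp only at hbh; linarith
          · simp
        · rintro ⟨h1, h2⟩
          obtain ⟨⟨u, z⟩, ⟨hu, hz⟩, ⟨a, y'⟩, ha, hE1⟩ := Set.mem_add.1 h1
          obtain ⟨⟨v, w⟩, ⟨hv, hw⟩, ⟨b, y''⟩, hb, hE2⟩ := Set.mem_add.1 h2
          simp only [Set.mem_Ici, Set.mem_Iic, Set.mem_singleton_iff] at hu hz hv hw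
          subst hz hw
          simp only [Prod.mk_add_mk, zero_add, Prod.mk.injEq] at hE1 hE2
          obtain ⟨h11, rfl⟩ := hE1
          obtain ⟨h21, rfl⟩ := hE2
          exact ⟨⟨a, ha, by simp only; linarith⟩, b, hb, by simp only; linarith⟩
      rw [this]
      exact h1.inter h2
    have hEslice : ∀ h : ℝ, IsCompact (Prod.mk h ⁻¹' E) := by
      intro h
      refine hPc.of_isClosed_subset (hEc.preimage (by fun_prop)) ?_
      rintro y ⟨⟨a, ha, -⟩, -⟩
      exact ⟨_, ha, rfl⟩
    -- step 1
    have step1 : volume K ≤ ENNReal.ofReal t * volume P + volume E := by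
      rw [volume_cons_preimage K]
      change volume Q ≤ _
      rw [Measure.volume_eq_prod, Measure.prod_apply_symm hQc.measurableSet,
        Measure.prod_apply_symm hEc.measurableSet,
        ← lintegral_indicator_const hPc.measurableSet,
        ← lintegral_add_left (measurable_const.indicator hPc.measurableSet)]
      apply lintegral_mono
      intro y
      by_cases hy : y ∈ P
      · simp only [Set.indicator_of_mem hy]
        have hc : IsCompact ((fun x : ℝ => (x, y)) ⁻¹' Q) := by
          refine (hQc.image continuous_fst).of_isClosed_subset
            (hQc.isClosed.preimage (by fun_prop)) ?_
          intro a ha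
          exact ⟨_, ha, rfl⟩
        obtain ⟨⟨a, y'⟩, ha, rfl⟩ := hy
        exact one_dim hc ⟨a, ha⟩
      · have : (fun x : ℝ => (x, y)) ⁻¹' Q = ∅ := by
          ext a
          simp only [Set.mem_preimage, Set.mem_empty_iff_false, iff_false]
          exact fun h => hy ⟨_, h, rfl⟩
        simp [this]
    -- the two halves
    have hF : ENNReal.ofReal t * volume P ≤
        ∑ σ : Fin n → Bool, volume (centres t K (Fin.cons false σ)) := by
      refine (mul_le_mul_right (ih P hPc) _).trans ?_
      rw [Finset.mul_sum]
      refine Finset.sum_le_sum fun σ _ => ?_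
      rw [volume_cons_preimage]
      calc ENNReal.ofReal t * volume (centres t P σ)
          = volume (Set.Icc 0 t ×ˢ centres t P σ) := by
            rw [Measure.volume_eq_prod, Measure.prod_prod, Real.volume_Icc, sub_zero]
        _ ≤ _ := by
            apply measure_mono
            rintro ⟨a, y⟩ ⟨ha, hy1, hy2⟩
            refine ⟨?_, ?_⟩
            · intro i
              refine Fin.cases ?_ ?_ i
              · intro _; simpa using ha
              · intro j hj; simpa using hy1 j (by simpa using hj)
            · intro s
              obtain ⟨x, ⟨⟨b, x'⟩, hb, rfl⟩, hx⟩ := hy2 (fun i => s i.succ)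
              refine ⟨_, hb, ?_⟩
              intro i
              refine Fin.cases ?_ ?_ i
              · intro h; simp at h
              · intro j hj; simpa using hx j (by simpa using hj)
    have hT : volume E ≤ ∑ σ : Fin n → Bool, volume (centres t K (Fin.cons true σ)) := by
      rw [Measure.volume_eq_prod, Measure.prod_apply hEc.measurableSet]
      simp_rw [volume_cons_preimage (centres t K _)]
      rw [Measure.volume_eq_prod]
      apply lintegral_slice_le
      intro h
      refine (ih _ (hEslice h)).trans (Finset.sum_le_sum fun σ _ => measure_mono ?_)
      rintro y ⟨hy1, hy2⟩
      refine ⟨?_, ?_⟩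
      · intro i
        refine Fin.cases ?_ ?_ i
        · intro h; simp at h
        · intro j hj; simpa using hy1 j (by simpa using hj)
      · intro s
        obtain ⟨x, ⟨⟨a, ha, hah⟩, ⟨b, hb, hbh⟩⟩, hx⟩ := hy2 (fun i => s i.succ)
        simp only at ha hah hb hbh
        cases hs : s 0
        · refine ⟨_, ha, ?_⟩
          intro i
          refine Fin.cases ?_ ?_ i
          · intro _; simpa [hs] using hah
          · intro j hj; simpa using hx j (by simpa using hj)
        · refine ⟨_, hb, ?_⟩
          intro i
          refine Fin.cases ?_ ?_ i
          · intro _; simpa [hs] using hbh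
          · intro j hj; simpa using hx j (by simpa using hj)
    refine step1.trans ((add_le_add hF hT).trans (le_of_eq ?_))
    rw [← (Fin.consEquiv (fun _ : Fin (n + 1) => Bool)).sum_comp, Fintype.sum_prod_type,
      Fintype.sum_bool, add_comm]
    rfl

/-- number of unshattered coordinates -/
def nf {n : ℕ} (σ : Fin n → Bool) : ℕ := (Finset.univ.filter fun i => σ i = false).card

lemma nf_le {n : ℕ} (σ : Fin n → Bool) : nf σ ≤ n := by
  unfold nf
  simpa using Finset.card_le_univ (Finset.univ.filter fun i => σ i = false)

lemma prod_nf {n : ℕ} (σ : Fin n → Bool) (a b : ℝ) :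
    ∏ i, (if σ i = false then b else a) = b ^ nf σ * a ^ (n - nf σ) := by
  rw [Finset.prod_ite, Finset.prod_const, Finset.prod_const]
  congr 2
  have := Finset.card_filter_add_card_filter_not (s := (Finset.univ : Finset (Fin n)))
    (fun i => σ i = false)
  simp only [Finset.card_univ, Fintype.card_fin] at this
  unfold nf
  omega

lemma sum_pow_nf {n : ℕ} (x : ℝ) : ∑ σ : Fin n → Bool, x ^ nf σ = (1 + x) ^ n := by
  have h := Finset.prod_univ_sum (fun _ : Fin n => (Finset.univ : Finset Bool))
    (fun _ b => if b = false then x else (1 : ℝ))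
  simp only [Fintype.piFinset_univ, Fintype.sum_bool] at h
  simp only [prod_nf] at h
  simpa using h.symm

/-- The solidity property of the ball used in the proof. -/
def Solid {n : ℕ} (B : Set (Fin n → ℝ)) : Prop :=
  ∀ (σ : Fin n → Bool) (y z : Fin n → ℝ), z ∈ B →
    (∀ i, σ i = true → |y i| ≤ (1 - (nf σ : ℝ) / n) * |z i|) →
    (∀ i, σ i = false → |y i| ≤ 1) → y ∈ B

lemma aux_pow (n m : ℕ) (hm : m ≤ n) : ((1 : ℝ) / 3) ^ m ≤ (1 - (m : ℝ) / n) ^ (n - m) := by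
  obtain ⟨j, rfl⟩ := Nat.exists_eq_add_of_le hm
  rcases Nat.eq_zero_or_pos j with rfl | hj
  · simpa using pow_le_one₀ (n := m) (by norm_num : (0 : ℝ) ≤ 1 / 3) (by norm_num)
  have hj' : (0 : ℝ) < j := by exact_mod_cast hj
  have hm0 : (0 : ℝ) ≤ m := by positivity
  have e1 : (1 - (m : ℝ) / ((m + j : ℕ) : ℝ)) = (1 + (m : ℝ) / j)⁻¹ := by
    push_cast
    field_simp
    ring
  rw [e1, Nat.add_sub_cancel_left, inv_pow, one_div, inv_pow]
  apply inv_anti₀ (by positivity)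
  calc (1 + (m : ℝ) / j) ^ j ≤ (Real.exp ((m : ℝ) / j)) ^ j := by
        gcongr
        linarith [Real.add_one_le_exp ((m : ℝ) / j)]
    _ = Real.exp 1 ^ m := by
        rw [← Real.exp_nat_mul, ← Real.exp_nat_mul]
        congr 1
        field_simp
    _ ≤ 3 ^ m := by
        gcongr
        linarith [Real.exp_one_lt_d9]

lemma volume_centres_le {n : ℕ} {B K : Set (Fin n → ℝ)} (hB : Solid B) (hK : K ⊆ B) {t : ℝ}
    (ht : 0 < t) (σ : Fin n → Bool) :
    volume (centres t K σ) ≤ ENNReal.ofReal ((3 * t) ^ nf σ) * volume B := by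
  set d : Fin n → ℝ := fun i => if σ i = false then 1 / t else (1 - (nf σ : ℝ) / n) with hd
  set f := Matrix.toLin' (Matrix.diagonal d) with hf
  have hnn : 0 ≤ 1 - (nf σ : ℝ) / n := by
    have h1 : (nf σ : ℝ) ≤ n := by exact_mod_cast nf_le σ
    have := div_le_one_of_le₀ h1 (by positivity)
    linarith
  have himg : f '' centres t K σ ⊆ B := by
    rintro _ ⟨h, ⟨h1, h2⟩, rfl⟩
    obtain ⟨x, hx, hxs⟩ := h2 (fun i => decide (0 ≤ h i))
    refine hB σ _ x (hK hx) ?_ ?_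
    · intro i hi
      have : f h i = (1 - (nf σ : ℝ) / n) * h i := by
        simp [hf, hd, Matrix.toLin'_apply, Matrix.mulVec_diagonal, hi]
      rw [this, abs_mul, abs_of_nonneg hnn]
      refine mul_le_mul_of_nonneg_left ?_ hnn
      obtain ⟨ha, hb⟩ := hxs i hi
      by_cases h0 : 0 ≤ h i
      · have := ha (by simpa using h0)
        rw [abs_of_nonneg h0]
        exact le_trans (by linarith) (le_abs_self _)
      · have := hb (by simpa using h0)
        push Not at h0
        rw [abs_of_neg h0]
        exact le_trans (by linarith) (neg_le_abs _)
    · intro i hi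
      have : f h i = 1 / t * h i := by
        simp [hf, hd, Matrix.toLin'_apply, Matrix.mulVec_diagonal, hi]
      obtain ⟨ha, hb⟩ := h1 i hi
      rw [this, abs_of_nonneg (by positivity)]
      field_simp
      exact hb
  have hdet : LinearMap.det f = (1 / t) ^ nf σ * (1 - (nf σ : ℝ) / n) ^ (n - nf σ) := by
    rw [hf, LinearMap.det_toLin', Matrix.det_diagonal, hd, prod_nf]
  have hvol := Measure.addHaar_image_linearMap volume f (centres t K σ)
  have hge : 1 ≤ (3 * t) ^ nf σ * |LinearMap.det f| := by
    rw [hdet, abs_of_nonneg (by positivity)]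
    have := aux_pow n (nf σ) (nf_le σ)
    calc (1 : ℝ) = (3 * t) ^ nf σ * ((1 / t) ^ nf σ * (1 / 3) ^ nf σ) := by
          rw [← mul_pow, ← mul_pow]
          field_simp
          simp
      _ ≤ _ := by gcongr
  calc volume (centres t K σ) = 1 * volume (centres t K σ) := (one_mul _).symm
    _ ≤ ENNReal.ofReal ((3 * t) ^ nf σ * |LinearMap.det f|) * volume (centres t K σ) := by
        gcongr
        simpa using ENNReal.ofReal_le_ofReal hge
    _ = ENNReal.ofReal ((3 * t) ^ nf σ) * volume (f '' centres t K σ) := by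
        rw [hvol, ENNReal.ofReal_mul (by positivity), mul_assoc]
    _ ≤ _ := by gcongr

lemma shattered_of_centres {n : ℕ} {K : Set (Fin n → ℝ)} {t : ℝ} {σ : Fin n → Bool}
    (h : (centres t K σ).Nonempty) :
    TShattered K (Finset.univ.filter fun i => σ i = true) t := by
  obtain ⟨h, -, h2⟩ := h
  refine ⟨h, fun S hS => ?_⟩
  obtain ⟨x, hx, hxs⟩ := h2 (fun i => decide (i ∈ S))
  refine ⟨x, hx, fun i hi => ?_, fun i hi => ?_⟩
  · exact (hxs i (by simpa using hS hi)).1 (by simpa using hi)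
  · simp only [Finset.mem_sdiff, Finset.mem_filter, Finset.mem_univ, true_and] at hi
    exact (hxs i hi.1).2 (by simpa using hi.2)

lemma card_true {n : ℕ} (σ : Fin n → Bool) :
    (Finset.univ.filter fun i => σ i = true).card = n - nf σ := by
  have := Finset.card_filter_add_card_filter_not (s := (Finset.univ : Finset (Fin n)))
    (fun i => σ i = false)
  simp only [Finset.card_univ, Fintype.card_fin, Bool.not_eq_false] at this
  unfold nf
  omega

/-- The numerical estimate. -/
lemma sum_bound {n k : ℕ} (hk : 0 < k) (hkn : k ≤ n) {r : ℝ} (hr : 0 < r) (hr1 : r ≤ 1) :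
    ∑ σ : Fin n → Bool, (if k < nf σ then
      (3 * (1 / 18 * ((k : ℝ) / n) * r ^ ((1 : ℝ) / k))) ^ nf σ else 0) ≤ r / 2 := by
  have hk' : (0 : ℝ) < k := by exact_mod_cast hk
  have hn' : (0 : ℝ) < n := by exact_mod_cast hk.trans_le hkn
  set u : ℝ := r ^ ((1 : ℝ) / k) with hu
  have hu0 : 0 < u := Real.rpow_pos_of_pos hr _
  have hu1 : u ≤ 1 := Real.rpow_le_one hr.le hr1 (by positivity)
  have huk : u ^ k = r := by
    rw [hu, ← Real.rpow_natCast, ← Real.rpow_mul hr.le]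
    field_simp
    simp
  set w : ℝ := u / 6 with hw
  have hw0 : 0 < w := by positivity
  have hw1 : w ≤ 1 := by linarith
  have e : 3 * (1 / 18 * ((k : ℝ) / n) * u) = w * ((k : ℝ) / n) := by rw [hw]; ring
  rw [e]
  calc ∑ σ : Fin n → Bool, (if k < nf σ then (w * ((k : ℝ) / n)) ^ nf σ else 0)
      ≤ ∑ σ : Fin n → Bool, w ^ k * ((k : ℝ) / n) ^ nf σ := by
        refine Finset.sum_le_sum fun σ _ => ?_
        split_ifs with h
        · rw [mul_pow]
          have := pow_le_pow_of_le_one hw0.le hw1 h.le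
          gcongr
        · positivity
    _ = w ^ k * (1 + (k : ℝ) / n) ^ n := by rw [← Finset.mul_sum, sum_pow_nf]
    _ ≤ w ^ k * (Real.exp ((k : ℝ) / n)) ^ n := by
        gcongr
        linarith [Real.add_one_le_exp ((k : ℝ) / n)]
    _ = w ^ k * Real.exp 1 ^ k := by
        rw [← Real.exp_nat_mul, ← Real.exp_nat_mul]
        congr 2
        field_simp
    _ = r * (Real.exp 1 / 6) ^ k := by
        rw [← huk, hw, ← mul_pow, ← mul_pow]
        congr 1
        ring
    _ ≤ r * (1 / 2) ^ k := by
        refine mul_le_mul_of_nonneg_left (pow_le_pow_left₀ (by positivity) ?_ k) hr.le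
        linarith [Real.exp_one_lt_d9]
    _ ≤ r * (1 / 2) := by
        gcongr
        exact pow_le_of_le_one (by norm_num) (by norm_num) hk.ne'
    _ = r / 2 := by ring

lemma main_solid {n k : ℕ} (hk : 0 < k) (hkn : k ≤ n) {B K : Set (Fin n → ℝ)} (hB : Solid B)
    (hne : K.Nonempty) (hK : MeasurableSet K) (hKB : K ⊆ B) :
    ∃ I : Finset (Fin n), n - k ≤ I.card ∧
      TShattered K I
        (1 / 18 * ((k : ℝ) / n) *
          ((volume K).toReal / (volume B).toReal) ^ ((1 : ℝ) / k)) := by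
  have hk' : (0 : ℝ) < k := by exact_mod_cast hk
  have hn' : (0 : ℝ) < n := by exact_mod_cast hk.trans_le hkn
  set r : ℝ := (volume K).toReal / (volume B).toReal with hr
  have hr0 : 0 ≤ r := by positivity
  rcases hr0.eq_or_lt with h0 | hpos
  · refine ⟨Finset.univ, by simp, ?_⟩
    rw [← h0, Real.zero_rpow (by positivity), mul_zero]
    obtain ⟨x, hx⟩ := hne
    exact ⟨x, fun S _ => ⟨x, hx, by simp, by simp⟩⟩
  have hVB0 : 0 < (volume B).toReal := by
    refine ENNReal.toReal_nonneg.lt_of_ne fun h => ?_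
    rw [hr, ← h, div_zero] at hpos
    exact lt_irrefl _ hpos
  have hVBtop : volume B ≠ ⊤ := (ENNReal.toReal_pos_iff.1 hVB0).2.ne
  have hVK0 : 0 < (volume K).toReal := by
    have : (volume K).toReal = r * (volume B).toReal := by rw [hr]; field_simp
    rw [this]; positivity
  have hVKtop : volume K ≠ ⊤ := (ENNReal.toReal_pos_iff.1 hVK0).2.ne
  have hr1 : r ≤ 1 := by
    rw [hr, div_le_one hVB0]
    exact ENNReal.toReal_mono hVBtop (measure_mono hKB)
  set t : ℝ := 1 / 18 * ((k : ℝ) / n) * r ^ ((1 : ℝ) / k) with ht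
  have ht0 : 0 < t := by
    have := Real.rpow_pos_of_pos hpos ((1 : ℝ) / k)
    positivity
  have hhalf : volume K / 2 < volume K :=
    ENNReal.half_lt_self (ENNReal.toReal_pos_iff.1 hVK0).1.ne' hVKtop
  obtain ⟨L, hLK, hL, hLv⟩ := hK.exists_lt_isCompact hhalf
  by_contra hcon
  push Not at hcon
  have hempty : ∀ σ : Fin n → Bool, ¬ k < nf σ → centres t L σ = ∅ := by
    intro σ hσ
    by_contra hne'
    have hsh := shattered_of_centres (Set.nonempty_iff_ne_empty.2 hne')
    refine hcon _ ?_ (?_ : TShattered K (Finset.univ.filter fun i => σ i = true) t)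
    · rw [card_true]; omega
    · obtain ⟨h, hh⟩ := hsh
      refine ⟨h, fun S hS => ?_⟩
      obtain ⟨x, hx, hx'⟩ := hh S hS
      exact ⟨x, hLK hx, hx'⟩
  have hle : volume L ≤ ENNReal.ofReal (r / 2) * volume B := by
    calc volume L ≤ ∑ σ : Fin n → Bool, volume (centres t L σ) :=
          volume_le_sum_centres ht0.le L hL
      _ ≤ ∑ σ : Fin n → Bool,
          ENNReal.ofReal (if k < nf σ then (3 * t) ^ nf σ else 0) * volume B := by
          refine Finset.sum_le_sum fun σ _ => ?_
          split_ifs with h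
          · exact volume_centres_le hB (hLK.trans hKB) ht0 σ
          · simp [hempty σ h]
      _ = ENNReal.ofReal (∑ σ : Fin n → Bool, if k < nf σ then (3 * t) ^ nf σ else 0) *
          volume B := by
          rw [← Finset.sum_mul, ENNReal.ofReal_sum_of_nonneg]
          intro σ _
          positivity
      _ ≤ _ := by
          gcongr
          exact sum_bound hk hkn hpos hr1
  have heq : ENNReal.ofReal (r / 2) * volume B = volume K / 2 := by
    rw [← ENNReal.ofReal_toReal hVBtop, ← ENNReal.ofReal_mul (by positivity),
      ← ENNReal.ofReal_toReal hVKtop,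
      show (2 : ENNReal) = ENNReal.ofReal 2 by simp, ← ENNReal.ofReal_div_of_pos (by norm_num)]
    congr 1
    rw [hr]
    field_simp
  rw [heq] at hle
  exact absurd hLv (not_lt.2 hle)

lemma solid_cube (n : ℕ) : Solid (cubeBall n) := by
  intro σ y z hz h1 h2 i
  cases hi : σ i
  · exact h2 i hi
  · refine (h1 i hi).trans ?_
    have h0 : (0 : ℝ) ≤ (nf σ : ℝ) / n := by positivity
    have h3 : (nf σ : ℝ) / n ≤ 1 :=
      div_le_one_of_le₀ (by exact_mod_cast nf_le σ) (by positivity)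
    exact mul_le_one₀ (by linarith) (abs_nonneg _) (hz i)

lemma solid_lp (n : ℕ) {p : ℝ} (hp : 1 ≤ p) : Solid (lpBall p n) := by
  intro σ y z hz h1 h2
  change ∑ i, |y i| ^ p ≤ (n : ℝ)
  change ∑ i, |z i| ^ p ≤ (n : ℝ) at hz
  set q : ℝ := 1 - (nf σ : ℝ) / n with hq
  have h0 : (0 : ℝ) ≤ (nf σ : ℝ) / n := by positivity
  have h3 : (nf σ : ℝ) / n ≤ 1 :=
    div_le_one_of_le₀ (by exact_mod_cast nf_le σ) (by positivity)
  have hq0 : 0 ≤ q := by linarith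
  have hq1 : q ≤ 1 := by linarith
  have key : ∀ i, |y i| ^ p ≤ q * |z i| ^ p + (if σ i = false then 1 else 0) := by
    intro i
    have hz0 : 0 ≤ |z i| ^ p := by positivity
    cases hi : σ i
    · have : |y i| ^ p ≤ 1 := Real.rpow_le_one (abs_nonneg _) (h2 i hi) (by linarith)
      simp only [if_true]
      nlinarith [mul_nonneg hq0 hz0]
    · simp only [Bool.true_eq_false, if_false, add_zero]
      calc |y i| ^ p ≤ (q * |z i|) ^ p :=
            Real.rpow_le_rpow (abs_nonneg _) (h1 i hi) (by linarith)
        _ = q ^ p * |z i| ^ p := Real.mul_rpow hq0 (abs_nonneg _)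
        _ ≤ q * |z i| ^ p := by
            gcongr
            exact Real.rpow_le_self_of_le_one hq0 hq1 hp
  calc ∑ i, |y i| ^ p ≤ ∑ i, (q * |z i| ^ p + (if σ i = false then 1 else 0)) :=
        Finset.sum_le_sum fun i _ => key i
    _ = q * ∑ i, |z i| ^ p + nf σ := by
        rw [Finset.sum_add_distrib, ← Finset.mul_sum, Finset.sum_boole]
        rfl
    _ ≤ q * n + nf σ := by gcongr
    _ = n := by
        rcases Nat.eq_zero_or_pos n with rfl | hn
        · have := nf_le σ
          have : nf σ = 0 := by omega
          simp [this]
        · have : (0 : ℝ) < n := by exact_mod_cast hn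
          rw [hq]; field_simp; ring

/-- **Theorem 4.1.** There is an absolute constant `c > 0` such that for every
measurable `K ⊆ B_p^n` (`1 ≤ p ≤ ∞`) and every `0 < k ≤ n`, one has
`v(K, t) ≥ n − k` for `t = c (k/n) (vol K / vol B_p^n)^{1/k}`. -/
theorem comb_dim_from_volume_in_lp_ball :
    ∃ c : ℝ, 0 < c ∧ ∀ (n k : ℕ), 0 < k → k ≤ n →
      (∀ (p : ℝ), 1 ≤ p → ∀ K : Set (Fin n → ℝ), K.Nonempty → MeasurableSet K →
        K ⊆ lpBall p n →
        ∃ I : Finset (Fin n), n - k ≤ I.card ∧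
          TShattered K I
            (c * ((k : ℝ) / n) *
              ((volume K).toReal / (volume (lpBall p n)).toReal) ^ ((1 : ℝ) / k))) ∧
      (∀ K : Set (Fin n → ℝ), K.Nonempty → MeasurableSet K → K ⊆ cubeBall n →
        ∃ I : Finset (Fin n), n - k ≤ I.card ∧
          TShattered K I
            (c * ((k : ℝ) / n) *
              ((volume K).toReal / (volume (cubeBall n)).toReal) ^ ((1 : ℝ) / k))) := by
  refine ⟨1 / 18, by norm_num, fun n k hk hkn => ⟨fun p hp K hne hK hKB => ?_,
    fun K hne hK hKB => ?_⟩⟩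
  · exact main_solid hk hkn (solid_lp n hp) hne hK hKB
  · exact main_solid hk hkn (solid_cube n) hne hK hKB
end
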